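/- arXiv:1802.00605 — 2 statements merged into one kernel-verified Lean document; each statement's English description precedes it below -/
import Mathlib

section
/- Let L_{n;c}^{(α)} = L_n^{(α)} + c·L_{n−1}^{(α)} with L_m^{(α)} the Laguerre polynomial. For c ≠ 0 with n + α + cn ≠ 0: disc(L_{n;c}^{(α)}) = 1/(n+α+cn) · ∏_{k=1}^n k^{k−2n+3} · ∏_{k=1}^{n−1} (k+α)^{k−1} · (−c)^n · L_{n;c}^{(α)}((nc² + (2n+α)c + n + α)/c). -/
open Polynomial

/-- The resultant: `Res f g = lc(f)^(deg g) * ∏_{α root of f} g(α)`. -/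
noncomputable def Res (f g : Polynomial ℂ) : ℂ :=
  f.leadingCoeff ^ g.natDegree * (f.roots.map (fun a => g.eval a)).prod

/-- The discriminant of a polynomial. -/
noncomputable def disc (f : Polynomial ℂ) : ℂ :=
  (-1) ^ (f.natDegree * (f.natDegree - 1) / 2) / f.leadingCoeff * Res f (derivative f)

/-- The generalized Laguerre polynomial
`L_m^{(α)}(x) = ∑_{k=0}^m binom(m+α, m−k) (−x)^k / k!`, where
`binom(m+α, m−k) = (∏_{j=k+1}^m (α+j)) / (m−k)!`. -/
noncomputable def L (α : ℂ) (m : ℕ) : Polynomial ℂ :=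
  ∑ k ∈ Finset.range (m + 1),
    C ((∏ j ∈ Finset.Icc (k + 1) m, (α + j)) / ((m - k).factorial * k.factorial) *
      (-1) ^ k) * X ^ k


lemma L_coeff (α : ℂ) (m k : ℕ) : (L α m).coeff k = if k ≤ m then
    ((∏ j ∈ Finset.Icc (k + 1) m, (α + j)) / ((m - k).factorial * k.factorial) * (-1) ^ k) else 0 := by
  unfold L
  simp only [finsetSum_coeff, coeff_C_mul, coeff_X_pow, mul_ite, mul_one, mul_zero]
  rw [Finset.sum_ite_eq]
  simp

lemma L_rel1 (α : ℂ) (m k : ℕ) :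
    ((m : ℂ) + 1 - k) * (L α (m+1)).coeff k = (m + 1 + α) * (L α m).coeff k := by
  rw [L_coeff, L_coeff]
  rcases lt_trichotomy k (m+1) with h | h | h
  · obtain ⟨d, rfl⟩ := Nat.exists_eq_add_of_le (Nat.lt_succ_iff.mp h)
    rw [if_pos (by omega), if_pos (by omega), Finset.prod_Icc_succ_top (by omega)]
    have e1 : k + d + 1 - k = d + 1 := by omega
    have e2 : k + d - k = d := by omega
    rw [e1, e2, Nat.factorial_succ]
    have h1 : (d.factorial : ℂ) ≠ 0 := by exact_mod_cast d.factorial_ne_zero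
    have h2 : (k.factorial : ℂ) ≠ 0 := by exact_mod_cast k.factorial_ne_zero
    have h3 : (d : ℂ) + 1 ≠ 0 := by exact_mod_cast d.succ_ne_zero
    push_cast
    field_simp
    ring
  · subst h; simp
  · rw [if_neg (by omega), if_neg (by omega)]; simp

lemma L_rel2 (α : ℂ) (m k : ℕ) :
    ((k : ℂ) + 1) * (L α m).coeff (k+1) =
      (k + 1) * (L α (m+1)).coeff (k+1) + (L α m).coeff k := by
  rw [L_coeff, L_coeff, L_coeff]
  rcases lt_trichotomy k m with h | h | h
  · obtain ⟨d, rfl⟩ := Nat.exists_eq_add_of_lt h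
    rw [if_pos (by omega), if_pos (by omega), if_pos (by omega),
      Finset.prod_Icc_succ_top (by omega : k + 1 + 1 ≤ k + d + 1 + 1),
      ← Finset.mul_prod_Ioc_eq_prod_Icc (by omega : k + 1 ≤ k + d + 1)]
    have e1 : k + d + 1 + 1 - (k + 1) = d + 1 := by omega
    have e2 : k + d + 1 - (k + 1) = d := by omega
    have e3 : k + d + 1 - k = d + 1 := by omega
    have e4 : Finset.Ioc (k+1) (k+d+1) = Finset.Icc (k+1+1) (k+d+1) := by
      ext x; simp only [Finset.mem_Ioc, Finset.mem_Icc]; omega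
    rw [e1, e2, e3, e4, Nat.factorial_succ, Nat.factorial_succ]
    generalize ∏ j ∈ Finset.Icc (k+1+1) (k+d+1), (α + (j:ℂ)) = P
    have h1 : (d.factorial : ℂ) ≠ 0 := by exact_mod_cast d.factorial_ne_zero
    have h2 : (k.factorial : ℂ) ≠ 0 := by exact_mod_cast k.factorial_ne_zero
    have h3 : (d : ℂ) + 1 ≠ 0 := by exact_mod_cast d.succ_ne_zero
    have h4 : (k : ℂ) + 1 ≠ 0 := by exact_mod_cast k.succ_ne_zero
    push_cast
    field_simp
    ring
  · subst h
    have h2 : (k.factorial : ℂ) ≠ 0 := by exact_mod_cast k.factorial_ne_zero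
    have h4 : (k : ℂ) + 1 ≠ 0 := by exact_mod_cast k.succ_ne_zero
    simp [Nat.factorial_succ]
    field_simp
    ring
  · rw [if_neg (by omega), if_neg (by omega), if_neg (by omega)]; simp

lemma L_A (α : ℂ) (m : ℕ) : X * derivative (L α (m+1)) =
    C ((m:ℂ)+1) * L α (m+1) - C ((m:ℂ)+1+α) * L α m := by
  ext k
  have h := L_rel1 α m k
  rcases k with _ | k
  · simp only [coeff_sub, mul_coeff_zero, coeff_X_zero, coeff_C_zero]
    push_cast at h
    linear_combination -h
  · simp only [coeff_sub, coeff_C_mul, coeff_X_mul, coeff_derivative]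
    push_cast at h
    linear_combination -h

lemma L_B (α : ℂ) (m : ℕ) : X * derivative (L α m) =
    C ((m:ℂ)+1) * L α (m+1) - C ((m:ℂ)+1+α) * L α m + X * L α m := by
  ext k
  have h := L_rel1 α m k
  rcases k with _ | k
  · simp only [coeff_sub, coeff_add, mul_coeff_zero, coeff_X_zero, coeff_C_zero]
    push_cast at h
    linear_combination -h
  · have h' := L_rel2 α m k
    simp only [coeff_sub, coeff_add, coeff_C_mul, coeff_X_mul, coeff_derivative]
    push_cast at h
    linear_combination -h + h'

lemma L_rec (α : ℂ) (m : ℕ) : C ((m:ℂ)+2) * L α (m+2) =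
    C (-((m:ℂ)+1+α)) * L α m + L α (m+1) * (C (2*(m:ℂ)+3+α) - X) := by
  have h1 := L_A α m
  have h2 := L_B α (m+1)
  rw [h1] at h2
  push_cast at h2
  simp only [map_add, map_neg, map_mul, map_ofNat, map_one] at h2 ⊢
  linear_combination -h2

lemma L_natDegree_le (α : ℂ) (m : ℕ) : (L α m).natDegree ≤ m := by
  rw [natDegree_le_iff_coeff_eq_zero]
  intro k hk
  rw [L_coeff, if_neg (by omega)]

lemma L_top (α : ℂ) (m : ℕ) : (L α m).coeff m = (-1)^m / m.factorial := by
  rw [L_coeff]; simp; ring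

lemma L_zero (α : ℂ) (m : ℕ) : (L α m).coeff 0 =
    (∏ j ∈ Finset.Icc 1 m, (α + j)) / m.factorial := by
  rw [L_coeff]; simp

/-- closed form of the resultant -/
lemma L_res (α : ℂ) (m : ℕ) : resultant (L α (m+1)) (L α m) (m+1) m =
    ∏ k ∈ Finset.Icc 1 m, ((-((k:ℂ)+α))^k / ((k:ℂ)+1)^k / (k.factorial:ℂ)^2) := by
  induction m with
  | zero => simp [L]
  | succ m ih =>
    rw [Finset.prod_Icc_succ_top (by omega), ← ih]
    have h1 := resultant_C_mul_left (L α (m+2)) (L α (m+1)) (m+2) (m+1) ((m:ℂ)+2)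
    rw [L_rec, resultant_add_mul_left _ _ _ _ _ _ (L_natDegree_le _ _), resultant_C_mul_left,
      resultant_add_left_deg _ _ m (m+1) 2 (L_natDegree_le _ _), L_top, resultant_comm] at h1
    · have h3 : (m : ℂ) + 2 ≠ 0 := by exact_mod_cast (m+1).succ_ne_zero
      have h2 : ((m+1).factorial : ℂ) ≠ 0 := by exact_mod_cast (m+1).factorial_ne_zero
      have s1 : ((-1:ℂ))^(m*(m+1)) = 1 := (Nat.even_mul_succ_self m).neg_one_pow
      have s2 : ((-1:ℂ))^((m+1)*2) = 1 := by simp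
      have s3 : (((-1:ℂ))^(m+1))^2 = 1 := by rw [← pow_mul]; simp
      rw [s1, s2, div_pow, s3] at h1
      have h4 : ((m:ℂ)+2)^(m+1) ≠ 0 := pow_ne_zero _ h3
      apply mul_left_cancel₀ h4
      rw [show m + 1 + 1 = m + 2 from rfl, ← h1]
      have h5 : ((m + 1 : ℕ) : ℂ) + 1 = m + 2 := by push_cast; ring
      rw [h5]
      push_cast
      field_simp
    · have : (C (2*(m:ℂ)+3+α) - X).natDegree ≤ 1 := by compute_degree
      omega

lemma Res_form (f g : ℂ[X]) (m : ℕ) (hg : g.natDegree ≤ m) :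
    resultant f g f.natDegree m = f.leadingCoeff ^ m * (f.roots.map (fun a => g.eval a)).prod := by
  exact resultant_eq_prod_eval f g m hg (IsAlgClosed.splits f)

lemma K_form (m : ℕ) : ∏ k ∈ Finset.Icc 1 (m+1), (k : ℂ) ^ ((k : ℤ) - 2 * ((m+1 : ℕ) : ℤ) + 3) =
    ((m+1).factorial : ℂ)^2 * ∏ k ∈ Finset.Icc 1 m, (1 / ((k:ℂ)+1)^k / (k.factorial:ℂ)^2) := by
  induction m with
  | zero => simp
  | succ m ih =>
    rw [Finset.prod_Icc_succ_top (by omega : 1 ≤ m + 1 + 1), Finset.prod_Icc_succ_top (by omega : 1 ≤ m + 1)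
      (fun k : ℕ => (1 / ((k:ℂ)+1)^k / (k.factorial:ℂ)^2))]
    have h1 : ∏ k ∈ Finset.Icc 1 (m+1), (k : ℂ) ^ ((k : ℤ) - 2 * ((m+1+1 : ℕ) : ℤ) + 3) =
        (∏ k ∈ Finset.Icc 1 (m+1), (k : ℂ) ^ ((k : ℤ) - 2 * ((m+1 : ℕ) : ℤ) + 3)) /
          ((m+1).factorial : ℂ)^2 := by
      rw [← Finset.prod_Ico_id_eq_factorial, Finset.Ico_add_one_right_eq_Icc, Nat.cast_prod, ← Finset.prod_pow,
        ← Finset.prod_div_distrib]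
      refine Finset.prod_congr rfl fun k hk => ?_
      have hk0 : (k : ℂ) ≠ 0 := by
        have := (Finset.mem_Icc.mp hk).1
        exact_mod_cast (by omega : k ≠ 0)
      rw [← zpow_natCast (k:ℂ) 2, ← zpow_sub₀ hk0]
      congr 1
      push_cast; ring
    rw [h1, ih]
    have h3 : (m : ℂ) + 2 ≠ 0 := by exact_mod_cast (m+1).succ_ne_zero
    have h2 : ((m+1).factorial : ℂ) ≠ 0 := by exact_mod_cast (m+1).factorial_ne_zero
    have h5 : ((m + 1 + 1 : ℕ) : ℂ) = m + 2 := by push_cast; ring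
    have h6 : ((m + 1 : ℕ) : ℂ) + 1 = m + 2 := by push_cast; ring
    have h7 : ((m+1+1).factorial : ℂ) = (m+2) * (m+1).factorial := by
      rw [Nat.factorial_succ (m+1), Nat.cast_mul, h5]
    have h8 : (((m+1+1 : ℕ) : ℤ) - 2 * ((m+1+1 : ℕ) : ℤ) + 3) = 2 - ((m+1 : ℕ) : ℤ) := by
      push_cast; ring
    rw [h8, h7, h5, h6, zpow_sub₀ h3, zpow_natCast]
    have h9 : ((m:ℂ)+2)^(2:ℤ) = (m+2)^2 := by norm_cast
    rw [h9]
    generalize ∏ k ∈ Finset.Icc 1 m, (1 / ((k:ℂ)+1)^k / (k.factorial:ℂ)^2) = T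
    field_simp

lemma key_form (α : ℂ) (m : ℕ) :
    (-1) ^ ((m+1) * m / 2) * ((m+1).factorial : ℂ)^2 *
      ∏ k ∈ Finset.Icc 1 m, ((-((k:ℂ)+α))^k / ((k:ℂ)+1)^k / (k.factorial:ℂ)^2) =
    (∏ k ∈ Finset.Icc 1 (m+1), (k : ℂ) ^ ((k : ℤ) - 2 * ((m+1 : ℕ) : ℤ) + 3)) *
      (∏ k ∈ Finset.Icc 1 m, ((k : ℂ) + α) ^ (k - 1)) * ∏ k ∈ Finset.Icc 1 m, (α + k) := by
  have hs : ((-1:ℂ)) ^ ((m+1) * m / 2) = ∏ k ∈ Finset.Icc 1 m, (-1:ℂ)^k := by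
    rw [Finset.prod_pow_eq_pow_sum]
    congr 1
    have := Finset.sum_range_id (m+1)
    rw [Nat.add_sub_cancel] at this
    rw [← this, Finset.range_eq_Ico, Finset.sum_eq_sum_Ico_succ_bot (by omega)]
    simp only [zero_add]
    rfl
  rw [hs, K_form, mul_assoc, mul_left_comm, mul_assoc, mul_assoc]
  congr 1
  rw [← Finset.prod_mul_distrib, ← Finset.prod_mul_distrib, ← Finset.prod_mul_distrib]
  refine Finset.prod_congr rfl fun k hk => ?_
  have hk1 := (Finset.mem_Icc.mp hk).1
  obtain ⟨j, rfl⟩ := Nat.exists_eq_add_of_le' hk1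
  rw [Nat.add_sub_cancel, neg_pow (((j+1 : ℕ) : ℂ) + α), add_comm α, ← pow_succ]
  have s3 : ((-1:ℂ))^(j+1) * (-1)^(j+1) = 1 := by rw [← mul_pow]; simp
  rw [mul_div_assoc, mul_div_assoc, ← mul_assoc, s3]
  ring

lemma main_form (α : ℂ) (m : ℕ) (hm : 1 ≤ m) (hα : ∀ k : ℕ, 1 ≤ k → α + k ≠ 0) (c : ℂ)
    (hc : c ≠ 0) (hden : ((m+1 : ℕ) : ℂ) + α + c * ((m+1 : ℕ) : ℂ) ≠ 0) :
    disc (L α (m+1) + C c * L α m) =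
      1 / (((m+1 : ℕ) : ℂ) + α + c * ((m+1 : ℕ) : ℂ)) *
        (∏ k ∈ Finset.Icc 1 (m+1), (k : ℂ) ^ ((k : ℤ) - 2 * ((m+1 : ℕ) : ℤ) + 3)) *
        (∏ k ∈ Finset.Icc 1 m, ((k : ℂ) + α) ^ (k - 1)) *
        (-c) ^ (m+1) *
        (L α (m+1) + C c * L α m).eval
          ((((m+1 : ℕ) : ℂ) * c ^ 2 + (2 * ((m+1 : ℕ) : ℂ) + α) * c + ((m+1 : ℕ) : ℂ) + α) / c) := by
  set f := L α (m+1) + C c * L α m with hf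
  set x := ((((m+1 : ℕ) : ℂ) * c ^ 2 + (2 * ((m+1 : ℕ) : ℂ) + α) * c + ((m+1 : ℕ) : ℂ) + α) / c)
    with hx
  have hfac : ((m+1).factorial : ℂ) ≠ 0 := by exact_mod_cast (m+1).factorial_ne_zero
  have htop : f.coeff (m+1) = (-1)^(m+1) / (m+1).factorial := by
    rw [hf, coeff_add, coeff_C_mul, L_top,
      coeff_eq_zero_of_natDegree_lt ((L_natDegree_le α m).trans_lt (Nat.lt_succ_self m))]
    simp
  have htop0 : f.coeff (m+1) ≠ 0 := by
    rw [htop]; exact div_ne_zero (pow_ne_zero _ (by norm_num)) hfac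
  have hdle : f.natDegree ≤ m+1 := by
    refine natDegree_add_le_of_degree_le (L_natDegree_le _ _) ?_
    exact (natDegree_C_mul_le _ _).trans ((L_natDegree_le _ _).trans (by omega))
  have hdeg : f.natDegree = m+1 := le_antisymm hdle (le_natDegree_of_ne_zero htop0)
  have hlc : f.leadingCoeff = (-1)^(m+1) / (m+1).factorial := by
    rw [leadingCoeff, hdeg, htop]
  have hlc0 : f.leadingCoeff ≠ 0 := by rw [leadingCoeff, hdeg]; exact htop0
  have hddeg : (derivative f).natDegree = m := by
    rw [natDegree_derivative, hdeg]; rfl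
  have hsp : f.Splits := IsAlgClosed.splits f
  have hcard : f.roots.card = m+1 := by rw [← hsp.natDegree_eq_card_roots, hdeg]
  have hD : f.leadingCoeff ^ m * (f.roots.map (fun a => (L α m).eval a)).prod =
      ∏ k ∈ Finset.Icc 1 m, ((-((k:ℂ)+α))^k / ((k:ℂ)+1)^k / (k.factorial:ℂ)^2) := by
    rw [← Res_form f _ m (L_natDegree_le _ _), hdeg, hf, mul_comm (C c),
      resultant_add_mul_left _ _ _ _ _ (by simp) (L_natDegree_le _ _), L_res]
  have hx0 : f.eval x = f.leadingCoeff * (f.roots.map (fun a => x - a)).prod :=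
    hsp.eval_eq_prod_roots x
  have hA0 : (∏ k ∈ Finset.Icc 1 m, (α + (k:ℂ))) ≠ 0 :=
    Finset.prod_ne_zero_iff.mpr fun k hk => hα k (Finset.mem_Icc.mp hk).1
  have hP0 : f.roots.prod = (∏ k ∈ Finset.Icc 1 m, (α + (k:ℂ))) *
      (((m+1 : ℕ) : ℂ) + α + c * ((m+1 : ℕ) : ℂ)) := by
    have h := hsp.coeff_zero_eq_leadingCoeff_mul_prod_roots
    rw [hdeg, hlc, hf, coeff_add, coeff_C_mul, L_zero, L_zero,
      Finset.prod_Icc_succ_top (by omega), Nat.factorial_succ, ← hf] at h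
    have s3 : ((-1:ℂ))^(m+1) * (-1)^(m+1) = 1 := by rw [← mul_pow]; simp
    have h4 : (m : ℂ) + 1 ≠ 0 := by exact_mod_cast m.succ_ne_zero
    have h5 : (m.factorial : ℂ) ≠ 0 := by exact_mod_cast m.factorial_ne_zero
    rw [mul_div_assoc' ((-1:ℂ)^(m+1)), s3] at h
    push_cast at h ⊢
    field_simp at h
    linear_combination -h
  have hrel : ∀ a ∈ f.roots, a * (derivative f).eval a =
      (-c) * ((L α m).eval a * (x - a)) := by
    intro a ha
    have h0 : f.eval a = 0 := (mem_roots'.mp ha).2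
    have h1 := congrArg (eval a) (L_A α m)
    have h2 := congrArg (eval a) (L_B α m)
    have h3 : c * x = (((m+1 : ℕ) : ℂ) * c ^ 2 + (2 * ((m+1 : ℕ) : ℂ) + α) * c
      + ((m+1 : ℕ) : ℂ) + α) := by rw [hx]; field_simp
    rw [hf] at h0 ⊢
    simp only [eval_add, eval_mul, eval_sub, eval_X, eval_C, derivative_add, derivative_mul,
      derivative_C, zero_mul, zero_add] at h0 h1 h2 ⊢
    push_cast at h3
    linear_combination h1 + c * h2 + (L α m).eval a * h3 + ((m:ℂ)+1) * (1 + c) * h0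
  have hP : f.roots.prod * (f.roots.map (fun a => (derivative f).eval a)).prod =
      (-c)^(m+1) * ((f.roots.map (fun a => (L α m).eval a)).prod *
        (f.roots.map (fun a => x - a)).prod) := by
    have := congrArg Multiset.prod (Multiset.map_congr rfl hrel)
    rw [Multiset.prod_map_mul, Multiset.prod_map_mul, Multiset.prod_map_mul, Multiset.map_const',
      Multiset.prod_replicate, hcard, Multiset.map_id'] at this
    exact this
  have hkey := key_form α m
  rw [← hD] at hkey
  have hl2 : f.leadingCoeff ^ 2 * ((m+1).factorial : ℂ)^2 = 1 := by
    rw [hlc, div_pow, div_mul_cancel₀ _ (pow_ne_zero 2 hfac), ← pow_mul]; simp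
  rw [hx0, disc, Res, hddeg, hdeg, Nat.add_sub_cancel]
  rw [hP0] at hP
  generalize (f.roots.map (fun a => (derivative f).eval a)).prod = P at *
  generalize (f.roots.map (fun a => (L α m).eval a)).prod = PL at *
  generalize (f.roots.map (fun a => x - a)).prod = Px at *
  generalize f.leadingCoeff = l at *
  generalize (∏ k ∈ Finset.Icc 1 (m+1), (k : ℂ) ^ ((k : ℤ) - 2 * ((m+1 : ℕ) : ℤ) + 3)) = K at *
  generalize (∏ k ∈ Finset.Icc 1 m, ((k : ℂ) + α) ^ (k - 1)) = Q at *
  generalize (∏ k ∈ Finset.Icc 1 m, (α + (k:ℂ))) = A at *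
  generalize (((m+1 : ℕ) : ℂ) + α + c * ((m+1 : ℕ) : ℂ)) = d at *
  generalize ((-1:ℂ)) ^ ((m+1) * m / 2) = s at *
  generalize (((m+1).factorial : ℕ) : ℂ) = F at *
  generalize (-c)^(m+1) = e at *
  rw [div_mul_eq_mul_div, div_eq_iff hlc0]
  apply mul_left_cancel₀ (mul_ne_zero hA0 hden)
  have hd1 : d * (1 / d) = 1 := by field_simp
  linear_combination (s * l^m) * hP + (e * Px * l^2) * hkey - (s * l^m * e * PL * Px) * hl2
    - (A * K * Q * e * l^2 * Px) * hd1

theorem stmt_16 (α : ℝ) (hα : -1 < α) (n : ℕ) (hn : 2 ≤ n) (c : ℂ) (hc : c ≠ 0)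
    (hden : (n : ℂ) + α + c * n ≠ 0) :
    disc (L α n + C c * L α (n - 1)) =
      1 / ((n : ℂ) + α + c * n) *
        (∏ k ∈ Finset.Icc 1 n, (k : ℂ) ^ ((k : ℤ) - 2 * n + 3)) *
        (∏ k ∈ Finset.Icc 1 (n - 1), ((k : ℂ) + α) ^ (k - 1)) *
        (-c) ^ n *
        (L α n + C c * L α (n - 1)).eval
          (((n : ℂ) * c ^ 2 + (2 * n + α) * c + n + α) / c) := by
  obtain ⟨m, rfl⟩ : ∃ m, n = m + 1 := ⟨n - 1, by omega⟩
  refine main_form α m (by omega) (fun k hk => ?_) c hc hden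
  have h1 : (1:ℝ) ≤ k := by exact_mod_cast hk
  have : α + (k:ℝ) ≠ 0 := by linarith
  exact_mod_cast this
end

section
/- If r ≡ 2, 3, 4, 5, or 6 (mod 8), then there do not exist rationals x₁,…,x_{r+1}, y₁,…,y_{r+1} satisfying Σ_{i=1}^{r+1} x_i y_i^k = a_k for all 0 ≤ k ≤ 2r, where a_{2j} = (2j)!/(2^{2j} j!) and a_{2j+1} = 0. -/
/-- The moments of the normalized Gaussian measure `e^{-t²}dt/√π`:
`a (2k) = (2k)! / (2^{2k} k!)` and `a (2k+1) = 0`. -/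
def gaussMoment (j : ℕ) : ℚ :=
  if Even j then (j.factorial : ℚ) / (2 ^ j * ((j / 2).factorial : ℚ)) else 0

open Polynomial

/-- Squared 2-adic norm. -/
def nn (x : ℚ) : ℚ := padicNorm 2 x ^ 2

lemma nn_mul (x y : ℚ) : nn (x * y) = nn x * nn y := by
  simp [nn, padicNorm.mul, mul_pow]

lemma nn_nonneg (x : ℚ) : 0 ≤ nn x := sq_nonneg _

lemma nn_zero : nn 0 = 0 := by simp [nn]

lemma nn_one : nn 1 = 1 := by simp [nn]

lemma nn_neg (x : ℚ) : nn (-x) = nn x := by simp [nn]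

lemma nn_two : nn 2 = 1 / 4 := by
  have : padicNorm 2 (2 : ℚ) = 2⁻¹ := by
    exact_mod_cast padicNorm.padicNorm_p (p := 2) (by norm_num)
  rw [nn, this]; norm_num

lemma nn_nat (m : ℕ) : nn m ≤ 1 := by
  have h := padicNorm.of_nat (p := 2) m
  have h0 := padicNorm.nonneg (p := 2) (m : ℚ)
  unfold nn
  nlinarith

lemma nn_add_le {x y M : ℚ} (hx : nn x ≤ M) (hy : nn y ≤ M) : nn (x + y) ≤ M := by
  have h := padicNorm.nonarchimedean (p := 2) (q := x) (r := y)
  have h0 := padicNorm.nonneg (p := 2) (x + y)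
  unfold nn at *
  rcases le_max_iff.1 h with h | h
  · exact (pow_le_pow_left₀ h0 h 2).trans hx
  · exact (pow_le_pow_left₀ h0 h 2).trans hy

lemma nn_add_lt {x y M : ℚ} (hx : nn x < M) (hy : nn y < M) : nn (x + y) < M :=
  (nn_add_le (le_max_left _ _) (le_max_right _ _)).trans_lt (max_lt hx hy)

lemma nn_add_eq {x y : ℚ} (h : nn y < nn x) : nn (x + y) = nn x := by
  apply le_antisymm (nn_add_le le_rfl h.le)
  by_contra hc
  push Not at hc
  have h1 : nn ((x + y) + (-y)) < nn x := nn_add_lt hc (by rwa [nn_neg])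
  simp at h1

lemma nn_dich (x : ℚ) : nn x ≤ 1 / 4 ∨ 1 ≤ nn x := by
  by_cases hx : x = 0
  · left; rw [hx, nn_zero]; norm_num
  have e : padicNorm 2 x = (2 : ℚ) ^ (-padicValRat 2 x) := by
    rw [padicNorm.eq_zpow_of_nonzero hx]; norm_num
  rcases le_or_gt (padicValRat 2 x) 0 with h | h
  · right
    have : (1 : ℚ) ≤ padicNorm 2 x := by
      rw [e]; exact one_le_zpow₀ (by norm_num) (by omega)
    unfold nn; nlinarith
  · left
    have h1 : padicNorm 2 x ≤ 1 / 2 := by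
      rw [e]
      calc (2 : ℚ) ^ (-padicValRat 2 x) ≤ 2 ^ (-1 : ℤ) :=
            zpow_le_zpow_right₀ (by norm_num) (by omega)
        _ = 1 / 2 := by norm_num
    have h0 := padicNorm.nonneg (p := 2) x
    unfold nn; nlinarith

/-- Weighted size of the `j`-th coefficient (Gauss norm with radius `|√2|`). -/
def ww (f : ℚ[X]) (j : ℕ) : ℚ := nn (f.coeff j) / 2 ^ j

lemma ww_nonneg (f : ℚ[X]) (j : ℕ) : 0 ≤ ww f j := div_nonneg (nn_nonneg _) (by positivity)

lemma ww_add_le {f g : ℚ[X]} {j : ℕ} {M : ℚ} (hf : ww f j ≤ M) (hg : ww g j ≤ M) :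
    ww (f + g) j ≤ M := by
  unfold ww at *
  rw [div_le_iff₀ (by positivity)] at *
  rw [coeff_add]; exact nn_add_le hf hg

lemma ww_add_lt {f g : ℚ[X]} {j : ℕ} {M : ℚ} (hf : ww f j < M) (hg : ww g j < M) :
    ww (f + g) j < M := by
  unfold ww at *
  rw [div_lt_iff₀ (by positivity)] at *
  rw [coeff_add]; exact nn_add_lt hf hg

lemma ww_add_eq {f g : ℚ[X]} {j : ℕ} (h : ww g j < ww f j) :
    ww (f + g) j = ww f j := by
  unfold ww at *
  rw [div_lt_div_iff_of_pos_right (by positivity)] at h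
  rw [coeff_add, nn_add_eq h]

lemma ww_C_mul (a : ℚ) (f : ℚ[X]) (j : ℕ) : ww (C a * f) j = nn a * ww f j := by
  simp [ww, nn_mul, mul_div_assoc]

lemma ww_X_mul (f : ℚ[X]) (j : ℕ) : ww (X * f) (j + 1) = ww f j / 2 := by
  simp [ww, pow_succ]; ring

lemma ww_X_mul_zero (f : ℚ[X]) : ww (X * f) 0 = 0 := by
  simp [ww, nn_zero]

/-- The maximal weighted coefficient is unique. -/
def UU (f : ℚ[X]) : Prop := ∃ k, 0 < ww f k ∧ ∀ j, j ≠ k → ww f j < ww f k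

lemma UU_one : UU 1 := by
  refine ⟨0, by simp [ww, nn_one], fun j hj => ?_⟩
  simp [ww, nn_one, coeff_one, hj, nn_zero]

lemma UU_linear (a : ℚ) (f : ℚ[X]) (hf : UU f) : UU ((X - C a) * f) := by
  obtain ⟨k, hk0, hk⟩ := hf
  have hle : ∀ j, ww f j ≤ ww f k := fun j => by
    by_cases h : j = k
    · rw [h]
    · exact (hk j h).le
  have e : (X - C a) * f = X * f + C (-a) * f := by rw [C_neg]; ring
  have e' : (X - C a) * f = C (-a) * f + X * f := by rw [C_neg]; ring
  have ha : ∀ j, ww (C (-a) * f) j = nn a * ww f j := fun j => by rw [ww_C_mul, nn_neg]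
  have ha0 := nn_nonneg a
  rcases nn_dich a with h | h
  · have hlt : ∀ j, ww (C (-a) * f) j < ww f k / 2 := fun j => by
      rw [ha]; nlinarith [hle j, ww_nonneg f j]
    have h1 : ww ((X - C a) * f) (k + 1) = ww f k / 2 := by
      rw [e, ww_add_eq, ww_X_mul]
      rw [ww_X_mul]; exact hlt _
    refine ⟨k + 1, by rw [h1]; linarith, fun j hj => ?_⟩
    rw [h1, e]
    refine ww_add_lt ?_ (hlt j)
    rcases j with _ | j
    · rw [ww_X_mul_zero]; linarith
    · rw [ww_X_mul]; linarith [hk j (by omega)]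
  · have hpos : 0 < nn a * ww f k := by positivity
    have hlt : ∀ j, ww (X * f) j < nn a * ww f k := fun j => by
      rcases j with _ | j
      · rw [ww_X_mul_zero]; exact hpos
      · rw [ww_X_mul]; nlinarith [hle j]
    have h1 : ww ((X - C a) * f) k = nn a * ww f k := by
      rw [e', ww_add_eq, ha]
      rw [ha]; exact hlt _
    refine ⟨k, by rw [h1]; exact hpos, fun j hj => ?_⟩
    rw [h1, e']
    refine ww_add_lt ?_ (hlt j)
    rw [ha]
    exact mul_lt_mul_of_pos_left (hk j hj) (by linarith)

lemma UU_prod {ι : Type*} (s : Finset ι) (z : ι → ℚ) : UU (∏ i ∈ s, (X - C (z i))) := by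
  classical
  induction s using Finset.induction_on with
  | empty => simpa using UU_one
  | insert i s hi ih => rw [Finset.prod_insert hi]; exact UU_linear _ _ ih

lemma not_UU {p q : ℚ[X]} {M : ℚ} {i j : ℕ} (hij : i ≠ j) (hp : ∀ k, ww p k ≤ M)
    (hq : ∀ k, ww q k < M) (hi : ww p i = M) (hj : ww p j = M) : ¬ UU (p + q) := by
  rintro ⟨k, -, hk⟩
  have hle : ww (p + q) k ≤ M := ww_add_le (hp k) (hq k).le
  have h1 : ww (p + q) i = M := by rw [ww_add_eq, hi]; rw [hi]; exact hq i
  have h2 : ww (p + q) j = M := by rw [ww_add_eq, hj]; rw [hj]; exact hq j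
  by_cases h : i = k
  · have := hk j (by omega)
    linarith
  · have := hk i h
    linarith

/-- Hermite polynomials (monic in the variable `s = 2t`). -/
noncomputable def HH : ℕ → ℚ[X]
  | 0 => 1
  | n + 1 => X * HH n - C 2 * derivative (HH n)

lemma HH_coeff_zero (n : ℕ) : (HH (n + 1)).coeff 0 = -(2 * (HH n).coeff 1) := by
  simp [HH, coeff_derivative]

lemma HH_coeff_succ (n j : ℕ) : (HH (n + 1)).coeff (j + 1) =
    (HH n).coeff j + -(2 * ((j + 2 : ℕ) : ℚ) * (HH n).coeff (j + 2)) := by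
  simp only [HH, coeff_sub, coeff_X_mul, coeff_C_mul, coeff_derivative]
  push_cast; ring

lemma HH_top (n : ℕ) : (HH n).coeff n = 1 ∧ ∀ j, n < j → (HH n).coeff j = 0 := by
  induction n with
  | zero =>
    refine ⟨by simp [HH], fun j hj => ?_⟩
    simp [HH, coeff_one]; omega
  | succ n ih =>
    refine ⟨?_, fun j hj => ?_⟩
    · rw [HH_coeff_succ, ih.1, ih.2 _ (by omega)]; simp
    · obtain ⟨j, rfl⟩ : ∃ i, j = i + 1 := ⟨j - 1, by omega⟩
      rw [HH_coeff_succ, ih.2 _ (by omega), ih.2 _ (by omega)]; simp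

lemma HH_ww_le (n : ℕ) : ∀ j, ww (HH n) j ≤ 1 / 2 ^ n := by
  induction n with
  | zero =>
    intro j
    rcases j with _ | j
    · simp [ww, HH, nn_one]
    · simp [ww, HH, coeff_one, nn_zero]
  | succ n ih =>
    intro j
    rcases j with _ | j
    · have := ih 1
      unfold ww at *
      rw [HH_coeff_zero, nn_neg, nn_mul, nn_two, pow_succ, ← div_div]
      linarith
    · unfold ww at *
      rw [div_le_iff₀ (by positivity), HH_coeff_succ]
      have h1 := ih j
      have h2 := ih (j + 2)
      rw [div_le_iff₀ (by positivity)] at h1 h2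
      apply nn_add_le
      · rw [pow_succ, pow_succ, ← div_div]; linarith
      · rw [nn_neg, nn_mul, nn_mul, nn_two]
        have h3 := nn_nat (j + 2)
        have h4 := nn_nonneg ((j + 2 : ℕ) : ℚ)
        have h5 := nn_nonneg ((HH n).coeff (j + 2))
        rw [pow_succ 2 n, pow_succ 2 j, ← div_div]
        rw [pow_add] at h2
        nlinarith

lemma HH_ww_top (n : ℕ) : ww (HH n) n = 1 / 2 ^ n := by
  rw [ww, (HH_top n).1, nn_one]

lemma HH_ww_bot (m : ℕ) : nn ((HH (2 * m)).coeff 0) = 1 / 2 ^ (2 * m) ∧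
    nn ((HH (2 * m + 1)).coeff 1) = 1 / 2 ^ (2 * m) := by
  have key : ∀ m, nn ((HH (2 * m)).coeff 0) = 1 / 2 ^ (2 * m) →
      nn ((HH (2 * m + 1)).coeff 1) = 1 / 2 ^ (2 * m) := by
    intro m h
    rw [HH_coeff_succ, nn_add_eq, h]
    rw [h, nn_neg, nn_mul]
    have h2 := HH_ww_le (2 * m) 2
    rw [ww, div_le_iff₀ (by positivity)] at h2
    have : (2 : ℚ) * ((0 + 2 : ℕ) : ℚ) = 2 * 2 := by norm_num
    rw [this, nn_mul, nn_two]
    have : (0 : ℚ) < 1 / 2 ^ (2 * m) := by positivity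
    simp only [zero_add]
    linarith
  induction m with
  | zero =>
    have : nn ((HH (2 * 0)).coeff 0) = 1 / 2 ^ (2 * 0) := by simp [HH, nn_one]
    exact ⟨this, key 0 this⟩
  | succ m ih =>
    have : nn ((HH (2 * (m + 1))).coeff 0) = 1 / 2 ^ (2 * (m + 1)) := by
      rw [show 2 * (m + 1) = (2 * m + 1) + 1 by ring, HH_coeff_zero, nn_neg, nn_mul, nn_two, ih.2]
      rw [pow_succ, pow_succ]; field_simp; norm_num
    exact ⟨this, key _ this⟩

lemma HH_two (n : ℕ) (hn : 2 ≤ n) : ∃ i, i ≠ n ∧ ww (HH n) i = 1 / 2 ^ n := by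
  rcases Nat.even_or_odd' n with ⟨m, rfl | rfl⟩
  · exact ⟨0, by omega, by rw [ww, (HH_ww_bot m).1]; simp⟩
  · exact ⟨1, by omega, by rw [ww, (HH_ww_bot m).2, div_div, ← pow_add]⟩

lemma HH_comb_not_UU (r : ℕ) (hr : 2 ≤ r) (c : ℚ) : ¬ UU (HH (r + 1) + C c * HH r) := by
  have hp : (0 : ℚ) < 1 / 2 ^ r := by positivity
  have hs : (1 : ℚ) / 2 ^ (r + 1) = 1 / 2 ^ r / 2 := by rw [pow_succ, div_div]
  rcases nn_dich c with h | h
  · obtain ⟨i, hi, hi'⟩ := HH_two (r + 1) (by omega)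
    refine not_UU hi (HH_ww_le _) (fun k => ?_) hi' (HH_ww_top _)
    rw [ww_C_mul, hs]
    nlinarith [HH_ww_le r k, ww_nonneg (HH r) k]
  · obtain ⟨i, hi, hi'⟩ := HH_two r hr
    rw [add_comm]
    refine not_UU (M := nn c * (1 / 2 ^ r)) hi (fun k => ?_) (fun k => ?_) ?_ ?_
    · rw [ww_C_mul]; exact mul_le_mul_of_nonneg_left (HH_ww_le _ _) (nn_nonneg _)
    · have := HH_ww_le (r + 1) k
      rw [hs] at this
      nlinarith
    · rw [ww_C_mul, hi']
    · rw [ww_C_mul, HH_ww_top]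

/-- Scaled moments. -/
def bb (k : ℕ) : ℚ := 2 ^ k * gaussMoment k

lemma bb_zero : bb 0 = 1 := by simp [bb, gaussMoment]

lemma bb_one : bb 1 = 0 := by simp [bb, gaussMoment]

lemma bb_rec (k : ℕ) : bb (k + 2) = 2 * (k + 1) * bb k := by
  unfold bb gaussMoment
  by_cases h : Even k
  · have h2 : Even (k + 2) := by simpa [Nat.even_add] using h
    rw [if_pos h, if_pos h2]
    obtain ⟨m, rfl⟩ := h
    rw [show (m + m + 2) / 2 = m + 1 by omega, show (m + m) / 2 = m by omega]
    have := Nat.factorial_ne_zero m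
    simp only [Nat.factorial_succ]
    push_cast
    field_simp
    ring
  · have h2 : ¬ Even (k + 2) := by simpa [Nat.even_add] using h
    rw [if_neg h, if_neg h2]; simp

/-- The Gaussian functional. -/
noncomputable def GG : ℚ[X] →ₗ[ℚ] ℚ := Polynomial.lsum fun k => bb k • LinearMap.id

lemma GG_monomial (k : ℕ) (c : ℚ) : GG (monomial k c) = bb k * c := by
  simp [GG, Polynomial.lsum_apply]

lemma GG_X_mul (p : ℚ[X]) : GG (X * p) = 2 * GG (derivative p) := by
  induction p using Polynomial.induction_on' with
  | add p q hp hq => rw [mul_add, map_add, derivative_add, map_add, hp, hq]; ring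
  | monomial k c =>
    rw [X_mul_monomial, derivative_monomial, GG_monomial, GG_monomial]
    rcases k with _ | k
    · simp [bb_one]
    · rw [bb_rec, Nat.add_sub_cancel]; push_cast; ring

lemma GG_HH_succ (k : ℕ) (p : ℚ[X]) : GG (HH (k + 1) * p) = 2 * GG (HH k * derivative p) := by
  have e : HH (k + 1) * p = X * (HH k * p) - (2 : ℚ) • (derivative (HH k) * p) := by
    rw [HH, smul_eq_C_mul]; ring
  rw [e, map_sub, GG_X_mul, derivative_mul, map_add, map_smul, smul_eq_mul]; ring

lemma GG_HH (d : ℕ) : ∀ p : ℚ[X], p.natDegree ≤ d →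
    GG (HH d * p) = 2 ^ d * d.factorial * p.coeff d := by
  induction d with
  | zero =>
    intro p hp
    rw [eq_C_of_natDegree_le_zero hp, HH, one_mul, ← monomial_zero_left, GG_monomial, bb_zero]
    simp
  | succ d ih =>
    intro p hp
    rw [GG_HH_succ, ih _ (by have := natDegree_derivative_le p; omega), coeff_derivative,
      Nat.factorial_succ]
    push_cast; ring

lemma HH_natDegree_le (n : ℕ) : (HH n).natDegree ≤ n :=
  natDegree_le_iff_coeff_eq_zero.2 fun j hj => (HH_top n).2 j hj

theorem stmt_19 (r : ℕ) (hr : 0 < r) (hmod : r % 8 = 2 ∨ r % 8 = 3 ∨ r % 8 = 4 ∨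
    r % 8 = 5 ∨ r % 8 = 6) :
    ¬ ∃ (x y : Fin (r + 1) → ℚ),
      ∀ k ≤ 2 * r, ∑ i, x i * y i ^ k = gaussMoment k := by
  rintro ⟨x, y, hxy⟩
  have hquad : ∀ p : ℚ[X], p.natDegree ≤ 2 * r → GG p = ∑ i, x i * p.eval (2 * y i) := by
    intro p hp
    conv_lhs => rw [p.as_sum_range' (2 * r + 1) (by omega)]
    simp only [eval_eq_sum_range' (show p.natDegree < 2 * r + 1 by omega), map_sum, GG_monomial,
      Finset.mul_sum]
    rw [Finset.sum_comm]
    refine Finset.sum_congr rfl fun k hk => ?_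
    rw [bb, ← hxy k (by have := Finset.mem_range.1 hk; omega), Finset.mul_sum, Finset.sum_mul]
    refine Finset.sum_congr rfl fun i _ => ?_
    rw [mul_pow]; ring
  set W : ℚ[X] := ∏ i, (X - C (2 * y i)) with hW
  have hWm : W.Monic := monic_prod_of_monic _ _ fun i _ => monic_X_sub_C _
  have hWd : W.natDegree = r + 1 := by
    rw [hW, natDegree_prod_of_monic _ _ fun i _ => monic_X_sub_C _]
    simp only [natDegree_X_sub_C]; simp
  have hWU : UU W := UU_prod _ _
  have hW0 : ∀ i, W.eval (2 * y i) = 0 := fun i => by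
    rw [hW, eval_prod]
    exact Finset.prod_eq_zero (Finset.mem_univ i) (by simp)
  set c : ℚ := (W - HH (r + 1)).coeff r with hc
  set p : ℚ[X] := W - HH (r + 1) - C c * HH r with hp
  have hpc : ∀ j, r ≤ j → p.coeff j = 0 := by
    intro j hj
    rcases hj.eq_or_lt with rfl | hj
    · rw [hp, coeff_sub, coeff_C_mul, (HH_top r).1, ← hc]; ring
    · rw [hp, coeff_sub, coeff_C_mul, (HH_top r).2 j hj, coeff_sub]
      rcases (Nat.succ_le_of_lt hj).eq_or_lt with rfl | hj'
      · have : W.coeff (r + 1) = 1 := by rw [← hWd]; exact hWm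
        simp [this, (HH_top (r + 1)).1]
      · rw [(HH_top (r + 1)).2 j hj', coeff_eq_zero_of_natDegree_lt (by omega)]; simp
  have hp0 : p = 0 := by
    by_contra hne
    have hlead : p.coeff p.natDegree ≠ 0 := by simpa using hne
    have hd : p.natDegree < r := by
      by_contra h
      exact hlead (hpc _ (by omega))
    have h1 := GG_HH p.natDegree p le_rfl
    have hHd := HH_natDegree_le p.natDegree
    have orth : ∀ n, p.natDegree < n → GG (HH n * HH p.natDegree) = 0 := fun n hn => by
      rw [GG_HH n _ (by omega), (HH_top _).2 n hn, mul_zero]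
    have hWo : GG (W * HH p.natDegree) = 0 := by
      rw [hquad]
      · exact Finset.sum_eq_zero fun i _ => by rw [eval_mul, hW0]; simp
      · refine natDegree_mul_le.trans ?_
        omega
    have e : HH p.natDegree * p = W * HH p.natDegree - HH (r + 1) * HH p.natDegree
        - c • (HH r * HH p.natDegree) := by
      rw [smul_eq_C_mul]
      generalize HH p.natDegree = h
      rw [hp]; ring
    rw [e, map_sub, map_sub, map_smul, hWo, orth _ (by omega), orth _ hd] at h1
    have : (2 : ℚ) ^ p.natDegree * p.natDegree.factorial * p.coeff p.natDegree ≠ 0 :=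
      mul_ne_zero (mul_ne_zero (by positivity) (by positivity)) hlead
    apply this
    rw [← h1]; simp
  have hWe : W = HH (r + 1) + C c * HH r := by
    have : W - HH (r + 1) - C c * HH r = 0 := hp0
    linear_combination this
  rw [hWe] at hWU
  exact HH_comb_not_UU r (by omega) c hWU
end
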